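/- Let Φ₁ : S₁(H₁) → S₁(K₁) and Φ₂ : S₁(H₂) → S₁(K₂) be quantum channels and Φ₁ ⊕ Φ₂ their direct sum acting on S₁(H₁ ⊕ H₂) (applying Φ_i on the diagonal blocks and erasing off-diagonal blocks). Then the one-shot quantum capacity satisfies Q^{(1)}(Φ₁ ⊕ Φ₂) = max{Q^{(1)}(Φ₁), Q^{(1)}(Φ₂)}, where Q^{(1)}(Φ) = max over pure bipartite inputs ρ^{AA′} of the coherent information H(Φ(ρ^{A′})) − H((id_A ⊗ Φ)(ρ^{AA′})). -/

import Mathlib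

open Matrix
open scoped BigOperators ComplexOrder

/-- Von Neumann entropy of a matrix (junk value `0` if not Hermitian),
computed spectrally with the convention `0 log 0 = 0`. -/
noncomputable def matEntropy {ι : Type*} [Fintype ι] [DecidableEq ι]
    (ρ : Matrix ι ι ℂ) : ℝ :=
  if h : ρ.IsHermitian then ∑ i, Real.negMulLog (h.eigenvalues i) else 0

/-- The ampliation `id_r ⊗ Φ` of a map `Φ` between matrix algebras. -/
def ampliate {r ι κ : Type*} (Φ : Matrix ι ι ℂ → Matrix κ κ ℂ)
    (X : Matrix (r × ι) (r × ι) ℂ) : Matrix (r × κ) (r × κ) ℂ :=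
  fun p q => Φ (fun c d => X (p.1, c) (q.1, d)) p.2 q.2

/-- Partial trace over the (first) reference system. -/
noncomputable def ptraceRef {r ι : Type*} [Fintype r] (X : Matrix (r × ι) (r × ι) ℂ) :
    Matrix ι ι ℂ :=
  fun a b => ∑ i, X (i, a) (i, b)

/-- The one-shot quantum capacity `Q^{(1)}(Φ)`: the supremum, over all reference
dimensions `d` and all pure bipartite input states `ψψ*`, of the coherent
information `H(Φ(ρ^{A′})) − H((id_A ⊗ Φ)(ρ^{AA′}))`. -/
noncomputable def Q1 {ι κ : Type*} [Fintype ι] [DecidableEq ι]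
    [Fintype κ] [DecidableEq κ] (Φ : Matrix ι ι ℂ → Matrix κ κ ℂ) : ℝ :=
  ⨆ d : ℕ, ⨆ ψ : {v : Fin d × ι → ℂ // ∑ x, ‖v x‖ ^ 2 = 1},
    (matEntropy (Φ (ptraceRef (Matrix.vecMulVec ψ.1 (star ψ.1)))) -
      matEntropy (ampliate Φ (Matrix.vecMulVec ψ.1 (star ψ.1))))

/-- A quantum channel: completely positive (all ampliations preserve positive
semidefiniteness) and trace preserving. -/
def IsCPTP {ι κ : Type*} [Fintype ι] [DecidableEq ι] [Fintype κ] [DecidableEq κ]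
    (Φ : Matrix ι ι ℂ → Matrix κ κ ℂ) : Prop :=
  (∀ (k : ℕ) (X : Matrix (Fin k × ι) (Fin k × ι) ℂ),
      X.PosSemidef → (ampliate Φ X).PosSemidef) ∧
  (∀ ρ, (Φ ρ).trace = ρ.trace)

/-- The direct sum channel `Φ₁ ⊕ Φ₂`: applies `Φ_i` on the diagonal blocks and
erases the off-diagonal blocks. -/
def dsumChannel {ι₁ κ₁ ι₂ κ₂ : Type*}
    (Φ₁ : Matrix ι₁ ι₁ ℂ → Matrix κ₁ κ₁ ℂ)
    (Φ₂ : Matrix ι₂ ι₂ ℂ → Matrix κ₂ κ₂ ℂ)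
    (ρ : Matrix (ι₁ ⊕ ι₂) (ι₁ ⊕ ι₂) ℂ) : Matrix (κ₁ ⊕ κ₂) (κ₁ ⊕ κ₂) ℂ :=
  Matrix.fromBlocks
    (Φ₁ (fun a b => ρ (Sum.inl a) (Sum.inl b))) 0 0
    (Φ₂ (fun a b => ρ (Sum.inr a) (Sum.inr b)))

namespace Q1Aux

lemma ent_eq_roots {ι : Type*} [Fintype ι] [DecidableEq ι] {A : Matrix ι ι ℂ}
    (hA : A.IsHermitian) :
    matEntropy A = (A.charpoly.roots.map (fun z => Real.negMulLog z.re)).sum := by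
  rw [matEntropy, dif_pos hA, hA.roots_charpoly_eq_eigenvalues, Multiset.map_map]
  rfl

lemma ent_reindex {ι κ : Type*} [Fintype ι] [DecidableEq ι] [Fintype κ] [DecidableEq κ]
    (e : ι ≃ κ) {A : Matrix ι ι ℂ} (hA : A.IsHermitian) :
    matEntropy (Matrix.reindex e e A) = matEntropy A := by
  have h : (Matrix.reindex e e A).IsHermitian := hA.submatrix _
  rw [ent_eq_roots h, ent_eq_roots hA, Matrix.charpoly_reindex]

lemma ent_blocks {ι κ : Type*} [Fintype ι] [DecidableEq ι] [Fintype κ] [DecidableEq κ]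
    {A : Matrix ι ι ℂ} {B : Matrix κ κ ℂ} (hA : A.IsHermitian) (hB : B.IsHermitian) :
    matEntropy (Matrix.fromBlocks A 0 0 B) = matEntropy A + matEntropy B := by
  have h : (Matrix.fromBlocks A 0 0 B).IsHermitian := hA.fromBlocks (by simp) hB
  rw [ent_eq_roots h, ent_eq_roots hA, ent_eq_roots hB, Matrix.charpoly_fromBlocks_zero₁₂,
    Polynomial.roots_mul (mul_ne_zero (Matrix.charpoly_monic A).ne_zero
      (Matrix.charpoly_monic B).ne_zero), Multiset.map_add, Multiset.sum_add]

lemma charpoly_smul {ι : Type*} [Fintype ι] [DecidableEq ι] {A : Matrix ι ι ℂ}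
    (hA : A.IsHermitian) (c : ℝ) :
    ((c : ℂ) • A).charpoly =
      ∏ i, (Polynomial.X - Polynomial.C ((c * hA.eigenvalues i : ℝ) : ℂ)) := by
  have h : (c : ℂ) • A = Unitary.conjStarAlgAut ℂ _ hA.eigenvectorUnitary
      (diagonal (fun i => ((c * hA.eigenvalues i : ℝ) : ℂ))) := by
    conv_lhs => rw [hA.spectral_theorem, ← map_smul]
    congr 1
    ext i j
    by_cases hij : i = j
    · subst hij; simp
    · simp [hij]
  rw [h, Unitary.conjStarAlgAut_apply, charpoly_mul_comm, ← mul_assoc]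
  simp [charpoly_diagonal]

lemma ent_smul {ι : Type*} [Fintype ι] [DecidableEq ι] {A : Matrix ι ι ℂ}
    (hA : A.IsHermitian) (c : ℝ) :
    matEntropy ((c : ℂ) • A) = A.trace.re * Real.negMulLog c + c * matEntropy A := by
  have h : ((c : ℂ) • A).IsHermitian := by
    rw [Matrix.IsHermitian, conjTranspose_smul, hA.eq]; simp
  have hr : ∀ i, (Polynomial.X - Polynomial.C ((c * hA.eigenvalues i : ℝ) : ℂ)).roots =
      {((c * hA.eigenvalues i : ℝ) : ℂ)} := fun i => Polynomial.roots_X_sub_C _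
  rw [ent_eq_roots h, charpoly_smul hA, Polynomial.roots_prod _ _
    (Finset.prod_ne_zero_iff.2 fun i _ => Polynomial.X_sub_C_ne_zero _), matEntropy, dif_pos hA,
    hA.trace_eq_sum_eigenvalues]
  simp only [hr, Multiset.map_bind, Multiset.sum_bind, Multiset.map_singleton,
    Multiset.sum_singleton, Complex.ofReal_re, Real.negMulLog_mul]
  simp [Finset.sum_mul, Finset.mul_sum, Finset.sum_add_distrib]

lemma homog {ι κ : Type*} [Fintype ι] [DecidableEq ι] [Fintype κ] [DecidableEq κ]
    {Φ : Matrix ι ι ℂ → Matrix κ κ ℂ} (h : IsCPTP Φ) (a : ℂ) (X : Matrix ι ι ℂ) :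
    Φ (a • X) = a • Φ X := by
  obtain ⟨hP, hT⟩ := h
  let V : Fin 3 → Matrix ι ι ℂ := ![1, X, a • X]
  let c : Fin 3 → ℂ := ![0, a, -1]
  let W : Matrix ι (Fin 3 × ι) ℂ := fun i p => V p.1 i p.2
  have hG : (Wᴴ * W).PosSemidef := posSemidef_conjTranspose_mul_self W
  have hb : ∀ i j, (fun s t => (Wᴴ * W) (i, s) (j, t)) = (V i)ᴴ * V j := by
    intro i j; ext s t; rfl
  have hQ := hP 3 _ hG
  set P := ampliate Φ (Wᴴ * W) with hPdef
  have hPe : ∀ i s j t, P (i, s) (j, t) = Φ ((V i)ᴴ * V j) s t := by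
    intro i s j t; rw [hPdef, ampliate]; simp only [hb]
  let u : κ → (Fin 3 × κ → ℂ) := fun b p => c p.1 * (if p.2 = b then 1 else 0)
  have hmv : ∀ b i s, (P *ᵥ u b) (i, s) = ∑ j, c j * Φ ((V i)ᴴ * V j) s b := by
    intro b i s
    simp only [mulVec, dotProduct, Fintype.sum_prod_type, hPe, u]
    refine Finset.sum_congr rfl fun j _ => ?_
    simp [mul_comm]
  have hq : ∀ b, star (u b) ⬝ᵥ (P *ᵥ u b) =
      ∑ i, ∑ j, star (c i) * c j * Φ ((V i)ᴴ * V j) b b := by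
    intro b
    rw [dotProduct, Fintype.sum_prod_type]
    simp only [hmv, u, Pi.star_apply]
    refine Finset.sum_congr rfl fun j _ => ?_
    simp [Finset.mul_sum, mul_assoc, apply_ite]
  have hsum : ∑ b, star (u b) ⬝ᵥ (P *ᵥ u b) = 0 := by
    simp only [hq]
    rw [Finset.sum_comm]
    have : ∀ i, ∑ b, ∑ j, star (c i) * c j * Φ ((V i)ᴴ * V j) b b =
        ∑ j, star (c i) * c j * ((V i)ᴴ * V j).trace := by
      intro i
      rw [Finset.sum_comm]
      refine Finset.sum_congr rfl fun j _ => ?_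
      rw [← hT, Matrix.trace, Finset.mul_sum]; rfl
    simp only [this]
    simp [Fin.sum_univ_three, c, V]
    ring
  have hz : ∀ b, P *ᵥ u b = 0 := by
    intro b
    rw [← hQ.dotProduct_mulVec_zero_iff]
    exact (Finset.sum_eq_zero_iff_of_nonneg
      (fun b _ => hQ.dotProduct_mulVec_nonneg (u b))).1 hsum b (Finset.mem_univ b)
  ext s b
  have := congrFun (hz b) (0, s)
  rw [hmv] at this
  simp [Fin.sum_univ_three, c, V] at this
  simp only [Matrix.smul_apply, smul_eq_mul]
  linear_combination -this

lemma map_zero' {ι κ : Type*} [Fintype ι] [DecidableEq ι] [Fintype κ] [DecidableEq κ]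
    {Φ : Matrix ι ι ℂ → Matrix κ κ ℂ} (h : IsCPTP Φ) : Φ 0 = 0 := by
  simpa using homog h 0 0

lemma map_psd {ι κ : Type*} [Fintype ι] [DecidableEq ι] [Fintype κ] [DecidableEq κ]
    {Φ : Matrix ι ι ℂ → Matrix κ κ ℂ} (h : IsCPTP Φ) {X : Matrix ι ι ℂ} (hX : X.PosSemidef) :
    (Φ X).PosSemidef := by
  have := h.1 1 (X.submatrix Prod.snd Prod.snd) (hX.submatrix _)
  exact this.submatrix (fun s => ((0 : Fin 1), s))

lemma ptrace_psd {r ι : Type*} [Fintype r] [Fintype ι]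
    {X : Matrix (r × ι) (r × ι) ℂ} (hX : X.PosSemidef) : (ptraceRef X).PosSemidef := by
  have : ptraceRef X = ∑ i, X.submatrix (fun s => (i, s)) (fun s => (i, s)) := by
    ext a b; simp [ptraceRef, Matrix.sum_apply]
  rw [this]
  exact posSemidef_sum _ fun i _ => hX.submatrix _

lemma trace_ptrace {r ι : Type*} [Fintype r] [Fintype ι]
    (X : Matrix (r × ι) (r × ι) ℂ) : (ptraceRef X).trace = X.trace := by
  simp only [Matrix.trace, ptraceRef, Matrix.diag, Fintype.sum_prod_type]
  exact Finset.sum_comm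

lemma trace_ampliate {r ι κ : Type*} [Fintype r] [Fintype ι] [DecidableEq ι]
    [Fintype κ] [DecidableEq κ] {Φ : Matrix ι ι ℂ → Matrix κ κ ℂ} (h : IsCPTP Φ)
    (X : Matrix (r × ι) (r × ι) ℂ) : (ampliate Φ X).trace = X.trace := by
  simp only [Matrix.trace, Matrix.diag, Fintype.sum_prod_type, ampliate]
  refine Finset.sum_congr rfl fun i _ => ?_
  exact h.2 (fun c d => X (i, c) (i, d))

/-- Unnormalised coherent information. -/
noncomputable def Ic {ι κ : Type*} [Fintype ι] [DecidableEq ι] [Fintype κ] [DecidableEq κ]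
    (Φ : Matrix ι ι ℂ → Matrix κ κ ℂ) {d : ℕ} (v : Fin d × ι → ℂ) : ℝ :=
  matEntropy (Φ (ptraceRef (Matrix.vecMulVec v (star v)))) -
      matEntropy (ampliate Φ (Matrix.vecMulVec v (star v)))

section
variable {ι κ : Type*} [Fintype ι] [DecidableEq ι] [Fintype κ] [DecidableEq κ]
  {Φ : Matrix ι ι ℂ → Matrix κ κ ℂ}

lemma out_psd (h : IsCPTP Φ) {d : ℕ} (v : Fin d × ι → ℂ) :
    (Φ (ptraceRef (Matrix.vecMulVec v (star v)))).PosSemidef :=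
  map_psd h (ptrace_psd (posSemidef_vecMulVec_self_star v))

lemma amp_psd (h : IsCPTP Φ) {d : ℕ} (v : Fin d × ι → ℂ) :
    (ampliate Φ (Matrix.vecMulVec v (star v))).PosSemidef :=
  h.1 _ _ (posSemidef_vecMulVec_self_star v)

lemma Ic_smul (h : IsCPTP Φ) {d : ℕ} (c : ℝ) (v : Fin d × ι → ℂ) :
    Ic Φ ((c : ℂ) • v) = c ^ 2 * Ic Φ v := by
  have h1 : vecMulVec ((c : ℂ) • v) (star ((c : ℂ) • v)) =
      ((c ^ 2 : ℝ) : ℂ) • vecMulVec v (star v) := by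
    ext i j; simp [vecMulVec_apply]; ring
  have h2 : ∀ (a : ℂ) (X : Matrix (Fin d × ι) (Fin d × ι) ℂ),
      ptraceRef (a • X) = a • ptraceRef X := by
    intro a X; ext i j; simp [ptraceRef, Finset.mul_sum]
  have h3 : ∀ (a : ℂ) (X : Matrix (Fin d × ι) (Fin d × ι) ℂ),
      ampliate Φ (a • X) = a • ampliate Φ X := by
    intro a X; ext i j
    exact congrFun (congrFun (homog h a (fun s t => X (i.1, s) (j.1, t))) i.2) j.2
  rw [Ic, h1, h2, h3, homog h, ent_smul (out_psd h v).1, ent_smul (amp_psd h v).1,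
    h.2, trace_ptrace, trace_ampliate h, Ic]
  ring

lemma ent_bounds {A : Matrix ι ι ℂ} (hA : A.PosSemidef) (ht : A.trace = 1) :
    0 ≤ matEntropy A ∧ matEntropy A ≤ Fintype.card ι := by
  have h1 : ∑ i, hA.1.eigenvalues i = 1 := by
    have := hA.1.trace_eq_sum_eigenvalues
    rw [ht] at this
    have h2 := congrArg Complex.re this
    simpa using h2.symm
  have h0 := hA.eigenvalues_nonneg
  rw [matEntropy, dif_pos hA.1]
  constructor
  · refine Finset.sum_nonneg fun i _ => Real.negMulLog_nonneg (h0 i) ?_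
    rw [← h1]
    exact Finset.single_le_sum (f := hA.1.eigenvalues) (fun j _ => h0 j) (Finset.mem_univ i)
  · calc _ ≤ ∑ i : ι, (1 : ℝ) := Finset.sum_le_sum fun i _ =>
          (Real.negMulLog_le_one_sub_self (h0 i)).trans (by linarith [h0 i])
      _ = _ := by simp

lemma trace_pure {α : Type*} [Fintype α] (v : α → ℂ) :
    (vecMulVec v (star v)).trace = ((∑ x, ‖v x‖ ^ 2 : ℝ) : ℂ) := by
  simp [Matrix.trace, vecMulVec_apply, Complex.mul_conj, Complex.normSq_eq_norm_sq]

lemma Ic_le_card (h : IsCPTP Φ) {d : ℕ} (v : Fin d × ι → ℂ) (hv : ∑ x, ‖v x‖ ^ 2 = 1) :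
    Ic Φ v ≤ Fintype.card κ := by
  have ht : (vecMulVec v (star v)).trace = 1 := by rw [trace_pure, hv]; simp
  have h1 := (ent_bounds (out_psd h v) (by rw [h.2, trace_ptrace, ht])).2
  have h2 := (ent_bounds (amp_psd h v) (by rw [trace_ampliate h, ht])).1
  rw [Ic]; linarith

end

section
variable {ι κ : Type*} [Fintype ι] [DecidableEq ι] [Fintype κ] [DecidableEq κ]
  {Φ : Matrix ι ι ℂ → Matrix κ κ ℂ}

lemma Q1_eq : Q1 Φ = ⨆ d : ℕ, ⨆ ψ : {v : Fin d × ι → ℂ // ∑ x, ‖v x‖ ^ 2 = 1}, Ic Φ ψ.1 := rfl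

lemma Q1_le {C : ℝ} (hC : 0 ≤ C)
    (hb : ∀ (d : ℕ) (v : Fin d × ι → ℂ), ∑ x, ‖v x‖ ^ 2 = 1 → Ic Φ v ≤ C) : Q1 Φ ≤ C := by
  rw [Q1_eq]
  exact ciSup_le fun d => Real.iSup_le (fun ψ => hb d _ ψ.2) hC

lemma le_Q1 {C : ℝ} (hC : 0 ≤ C)
    (hb : ∀ (d : ℕ) (v : Fin d × ι → ℂ), ∑ x, ‖v x‖ ^ 2 = 1 → Ic Φ v ≤ C)
    (d : ℕ) (v : Fin d × ι → ℂ) (hv : ∑ x, ‖v x‖ ^ 2 = 1) : Ic Φ v ≤ Q1 Φ := by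
  rw [Q1_eq]
  have h1 : Ic Φ v ≤ ⨆ ψ : {v : Fin d × ι → ℂ // ∑ x, ‖v x‖ ^ 2 = 1}, Ic Φ ψ.1 :=
    le_ciSup (f := fun ψ : {v : Fin d × ι → ℂ // ∑ x, ‖v x‖ ^ 2 = 1} => Ic Φ ψ.1)
      ⟨C, by rintro _ ⟨ψ, rfl⟩; exact hb d _ ψ.2⟩ ⟨v, hv⟩
  refine h1.trans (le_ciSup
    (f := fun d => ⨆ ψ : {v : Fin d × ι → ℂ // ∑ x, ‖v x‖ ^ 2 = 1}, Ic Φ ψ.1) ⟨C, ?_⟩ d)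
  rintro _ ⟨d, rfl⟩
  exact Real.iSup_le (fun ψ => hb d _ ψ.2) hC

lemma Q1_nonneg {C : ℝ} (hC : 0 ≤ C)
    (hb : ∀ (d : ℕ) (v : Fin d × ι → ℂ), ∑ x, ‖v x‖ ^ 2 = 1 → Ic Φ v ≤ C) : 0 ≤ Q1 Φ := by
  rw [Q1_eq]
  have h0 : (⨆ ψ : {v : Fin 0 × ι → ℂ // ∑ x, ‖v x‖ ^ 2 = 1}, Ic Φ ψ.1) = 0 := by
    have : IsEmpty {v : Fin 0 × ι → ℂ // ∑ x, ‖v x‖ ^ 2 = 1} := ⟨fun ψ => by simpa using ψ.2⟩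
    exact Real.iSup_of_isEmpty _
  rw [← h0]
  refine le_ciSup
    (f := fun d => ⨆ ψ : {v : Fin d × ι → ℂ // ∑ x, ‖v x‖ ^ 2 = 1}, Ic Φ ψ.1) ⟨C, ?_⟩ 0
  rintro _ ⟨d, rfl⟩
  exact Real.iSup_le (fun ψ => hb d _ ψ.2) hC

lemma Ic_zero (h : IsCPTP Φ) (d : ℕ) : Ic Φ (0 : Fin d × ι → ℂ) = 0 := by
  simpa using Ic_smul h 0 (0 : Fin d × ι → ℂ)

lemma Ic_le (h : IsCPTP Φ) {d : ℕ} (v : Fin d × ι → ℂ) :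
    Ic Φ v ≤ (∑ x, ‖v x‖ ^ 2) * Q1 Φ := by
  set p := ∑ x, ‖v x‖ ^ 2 with hp
  have hp0 : 0 ≤ p := Finset.sum_nonneg fun _ _ => by positivity
  rcases hp0.eq_or_lt with h0 | h0
  · have hv : v = 0 := by
      ext x
      have := (Finset.sum_eq_zero_iff_of_nonneg (s := Finset.univ)
        (f := fun x => ‖v x‖ ^ 2) (fun _ _ => by positivity)).1 h0.symm x (Finset.mem_univ x)
      simpa using this
    rw [← h0, hv, Ic_zero h]; simp
  · let w : Fin d × ι → ℂ := (((Real.sqrt p)⁻¹ : ℝ) : ℂ) • v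
    have hs : 0 < Real.sqrt p := Real.sqrt_pos.2 h0
    have hsq : Real.sqrt p ^ 2 = p := Real.sq_sqrt hp0
    have hw : ∑ x, ‖w x‖ ^ 2 = 1 := by
      have : ∀ x, ‖w x‖ ^ 2 = p⁻¹ * ‖v x‖ ^ 2 := by
        intro x
        simp only [w, Pi.smul_apply, smul_eq_mul, norm_mul, Complex.norm_real, mul_pow,
          Real.norm_eq_abs, sq_abs, inv_pow, hsq]
      simp only [this, ← Finset.mul_sum]
      rw [← hp]; exact inv_mul_cancel₀ h0.ne'
    have hvw : v = ((Real.sqrt p : ℝ) : ℂ) • w := by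
      simp only [w, smul_smul]
      rw [← Complex.ofReal_mul, mul_inv_cancel₀ hs.ne']; simp
    rw [hvw, Ic_smul h, hsq]
    exact mul_le_mul_of_nonneg_left
      (le_Q1 (Nat.cast_nonneg _) (fun d v hv => Ic_le_card h v hv) d w hw) hp0

end

section
variable {ι₁ κ₁ ι₂ κ₂ : Type*} [Fintype ι₁] [DecidableEq ι₁] [Fintype κ₁] [DecidableEq κ₁]
  [Fintype ι₂] [DecidableEq ι₂] [Fintype κ₂] [DecidableEq κ₂]
  {Φ₁ : Matrix ι₁ ι₁ ℂ → Matrix κ₁ κ₁ ℂ} {Φ₂ : Matrix ι₂ ι₂ ℂ → Matrix κ₂ κ₂ ℂ}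

lemma Ic_dsum (hh₁ : IsCPTP Φ₁) (hh₂ : IsCPTP Φ₂) {d : ℕ} (v : Fin d × (ι₁ ⊕ ι₂) → ℂ) :
    Ic (dsumChannel Φ₁ Φ₂) v = Ic Φ₁ (fun p => v (p.1, Sum.inl p.2)) +
      Ic Φ₂ (fun p => v (p.1, Sum.inr p.2)) := by
  set v₁ : Fin d × ι₁ → ℂ := fun p => v (p.1, Sum.inl p.2) with hv₁
  set v₂ : Fin d × ι₂ → ℂ := fun p => v (p.1, Sum.inr p.2) with hv₂
  have e1 : dsumChannel Φ₁ Φ₂ (ptraceRef (vecMulVec v (star v))) =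
      fromBlocks (Φ₁ (ptraceRef (vecMulVec v₁ (star v₁)))) 0 0
        (Φ₂ (ptraceRef (vecMulVec v₂ (star v₂)))) := rfl
  have e2 : ampliate (dsumChannel Φ₁ Φ₂) (vecMulVec v (star v)) =
      Matrix.reindex (Equiv.prodSumDistrib (Fin d) κ₁ κ₂).symm
        (Equiv.prodSumDistrib (Fin d) κ₁ κ₂).symm
        (fromBlocks (ampliate Φ₁ (vecMulVec v₁ (star v₁))) 0 0
          (ampliate Φ₂ (vecMulVec v₂ (star v₂)))) := by
    ext ⟨i, s⟩ ⟨j, t⟩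
    rcases s with s | s <;> rcases t with t | t <;> rfl
  have hb := (amp_psd hh₁ v₁).1.fromBlocks (by simp) (amp_psd hh₂ v₂).1
    (B := 0) (C := 0)
  rw [Ic, e1, e2, ent_reindex _ hb, ent_blocks (out_psd hh₁ v₁).1 (out_psd hh₂ v₂).1,
    ent_blocks (amp_psd hh₁ v₁).1 (amp_psd hh₂ v₂).1, Ic, Ic]
  ring

lemma norm_split {d : ℕ} (v : Fin d × (ι₁ ⊕ ι₂) → ℂ) :
    ∑ x, ‖v x‖ ^ 2 = ∑ p : Fin d × ι₁, ‖v (p.1, Sum.inl p.2)‖ ^ 2 +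
      ∑ p : Fin d × ι₂, ‖v (p.1, Sum.inr p.2)‖ ^ 2 := by
  simp [Fintype.sum_prod_type, Finset.sum_add_distrib]

lemma main (hh₁ : IsCPTP Φ₁) (hh₂ : IsCPTP Φ₂) :
    Q1 (dsumChannel Φ₁ Φ₂) = max (Q1 Φ₁) (Q1 Φ₂) := by
  have n1 : 0 ≤ Q1 Φ₁ := Q1_nonneg (Nat.cast_nonneg _) (fun d v hv => Ic_le_card hh₁ v hv)
  have hm : 0 ≤ max (Q1 Φ₁) (Q1 Φ₂) := n1.trans (le_max_left _ _)
  have hb : ∀ (d : ℕ) (v : Fin d × (ι₁ ⊕ ι₂) → ℂ), ∑ x, ‖v x‖ ^ 2 = 1 →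
      Ic (dsumChannel Φ₁ Φ₂) v ≤ max (Q1 Φ₁) (Q1 Φ₂) := by
    intro d v hv
    rw [Ic_dsum hh₁ hh₂]
    rw [norm_split] at hv
    have a1 := Ic_le hh₁ (fun p : Fin d × ι₁ => v (p.1, Sum.inl p.2))
    have a2 := Ic_le hh₂ (fun p : Fin d × ι₂ => v (p.1, Sum.inr p.2))
    have p1 : 0 ≤ ∑ p : Fin d × ι₁, ‖v (p.1, Sum.inl p.2)‖ ^ 2 :=
      Finset.sum_nonneg fun _ _ => by positivity
    have p2 : 0 ≤ ∑ p : Fin d × ι₂, ‖v (p.1, Sum.inr p.2)‖ ^ 2 :=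
      Finset.sum_nonneg fun _ _ => by positivity
    have b1 := mul_le_mul_of_nonneg_left (le_max_left (Q1 Φ₁) (Q1 Φ₂)) p1
    have b2 := mul_le_mul_of_nonneg_left (le_max_right (Q1 Φ₁) (Q1 Φ₂)) p2
    have : max (Q1 Φ₁) (Q1 Φ₂) = (∑ p : Fin d × ι₁, ‖v (p.1, Sum.inl p.2)‖ ^ 2) *
        max (Q1 Φ₁) (Q1 Φ₂) + (∑ p : Fin d × ι₂, ‖v (p.1, Sum.inr p.2)‖ ^ 2) *
        max (Q1 Φ₁) (Q1 Φ₂) := by rw [← add_mul, hv, one_mul]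
    linarith
  have hn : 0 ≤ Q1 (dsumChannel Φ₁ Φ₂) := Q1_nonneg hm hb
  refine le_antisymm (Q1_le hm hb) (max_le ?_ ?_)
  · refine Q1_le hn fun d v hv => ?_
    let w : Fin d × (ι₁ ⊕ ι₂) → ℂ := fun p => Sum.elim (fun s => v (p.1, s)) (fun _ => 0) p.2
    have := le_Q1 hm hb d w (by rw [norm_split]; simpa [w] using hv)
    rw [Ic_dsum hh₁ hh₂] at this
    have z : Ic Φ₂ (fun p : Fin d × ι₂ => w (p.1, Sum.inr p.2)) = 0 := Ic_zero hh₂ d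
    rw [z, add_zero] at this
    exact this
  · refine Q1_le hn fun d v hv => ?_
    let w : Fin d × (ι₁ ⊕ ι₂) → ℂ := fun p => Sum.elim (fun _ => 0) (fun s => v (p.1, s)) p.2
    have := le_Q1 hm hb d w (by rw [norm_split]; simpa [w] using hv)
    rw [Ic_dsum hh₁ hh₂] at this
    have z : Ic Φ₁ (fun p : Fin d × ι₁ => w (p.1, Sum.inl p.2)) = 0 := Ic_zero hh₁ d
    rw [z, zero_add] at this
    exact this

end

end Q1Aux

/-- For quantum channels `Φ₁ : S₁(H₁) → S₁(K₁)` and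
`Φ₂ : S₁(H₂) → S₁(K₂)`, the one-shot quantum capacity of the direct sum channel
satisfies `Q^{(1)}(Φ₁ ⊕ Φ₂) = max{Q^{(1)}(Φ₁), Q^{(1)}(Φ₂)}`. -/
theorem Q1_dsumChannel {h₁ k₁ h₂ k₂ : ℕ}
    (Φ₁ : Matrix (Fin h₁) (Fin h₁) ℂ → Matrix (Fin k₁) (Fin k₁) ℂ)
    (Φ₂ : Matrix (Fin h₂) (Fin h₂) ℂ → Matrix (Fin k₂) (Fin k₂) ℂ)
    (hΦ₁ : IsCPTP Φ₁) (hΦ₂ : IsCPTP Φ₂) :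
    Q1 (dsumChannel Φ₁ Φ₂) = max (Q1 Φ₁) (Q1 Φ₂) := by
  exact Q1Aux.main hΦ₁ hΦ₂
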